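/- Let β ∈ ℝ and M > 0. Let Q : ℝ × [0,∞) → ℂ be such that for each x the map k ↦ Q(x,k) is C¹ and |⟨x⟩^β ∂_k^j Q(x,k)| ≤ M for j = 0,1 and all x ∈ ℝ, k ≥ 0. Let φ : [0,∞) → ℂ be of the form φ(k) = k·ψ(k), where ψ : [0,∞) → ℂ is C¹ with |ψ(k)| + |ψ'(k)| ≤ ⟨k⟩^{−1} for all k ≥ 0. Then there exists C > 0 depending only on M such that for every t ∈ ℝ with |t| ≥ 1, every compactly supported C¹ function h : ℝ → ℂ, and every x ∈ ℝ: ⟨x⟩^β | ∫_0^∞ φ(k) Q(x,k) e^{ik²t} h(k) dk | ≤ C |t|^{−1} ‖h‖_{H¹(ℝ)}. -/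

import Mathlib

open MeasureTheory Filter Topology Set

noncomputable def jap (x : ℝ) : ℝ := Real.sqrt (1 + x ^ 2)

/-!
Write `Ψ(k) = (e^{ik²t} - 1) / (2it)`, the primitive of `k ↦ k e^{ik²t}` that vanishes at `0`. It is
bounded by `|t|⁻¹`, so integrating by parts against the amplitude `a = ψ Q h` leaves no boundary
term and costs one derivative of `a`: the integral is at most `|t|⁻¹ ‖a'‖_{L¹}`. By the product rule
`|a'| ≤ M ⟨k⟩⁻¹ (|h| + |h'|)`, and since `⟨k⟩⁻¹` is square integrable, Cauchy–Schwarz turns this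
into the `H¹` norm of `h`.
-/

theorem norm_integral_Ioi_mul_deriv_le {A : Type*} [NormedRing A] [NormedAlgebra ℝ A]
    [CompleteSpace A] {u u' v v' : ℝ → A} {a B : ℝ}
    (hu : ∀ k ∈ Ioi a, HasDerivAt u (u' k) k) (hv : ∀ k ∈ Ioi a, HasDerivAt v (v' k) k)
    (hu' : IntegrableOn u' (Ioi a)) (huv' : IntegrableOn (u * v') (Ioi a))
    (hua : ContinuousWithinAt u (Ioi a) a) (hva : Tendsto v (𝓝[>] a) (𝓝 0))
    (hu_infty : Tendsto u atTop (𝓝 0)) (hvB : ∀ k ∈ Ioi a, ‖v k‖ ≤ B) :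
    ‖∫ k in Ioi a, u k * v' k‖ ≤ B * ∫ k in Ioi a, ‖u' k‖ := by
  have hvm : AEStronglyMeasurable v (volume.restrict (Ioi a)) :=
    ContinuousOn.aestronglyMeasurable (fun k hk => (hv k hk).continuousAt.continuousWithinAt)
      measurableSet_Ioi
  have hbound : ∀ k ∈ Ioi a, ‖u' k * v k‖ ≤ B * ‖u' k‖ := fun k hk =>
    calc ‖u' k * v k‖ ≤ ‖u' k‖ * ‖v k‖ := norm_mul_le _ _
      _ ≤ ‖u' k‖ * B := by gcongr; exact hvB k hk
      _ = B * ‖u' k‖ := mul_comm _ _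
  have hu'v : IntegrableOn (u' * v) (Ioi a) :=
    (hu'.norm.const_mul B).mono' (hu'.1.mul hvm)
      (ae_restrict_of_forall_mem measurableSet_Ioi hbound)
  have h_zero : Tendsto (u * v) (𝓝[>] a) (𝓝 0) := by
    simpa only [mul_zero, Pi.mul_def] using hua.tendsto.mul hva
  have h_infty : Tendsto (u * v) atTop (𝓝 0) :=
    hu_infty.zero_mul_isBoundedUnder_le
      (isBoundedUnder_of_eventually_le ((eventually_gt_atTop a).mono hvB))
  rw [integral_Ioi_mul_deriv_eq_deriv_mul hu hv huv' hu'v h_zero h_infty, sub_zero, zero_sub,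
    norm_neg, ← integral_const_mul]
  exact norm_integral_le_of_norm_le (hu'.norm.const_mul B)
    (ae_restrict_of_forall_mem measurableSet_Ioi hbound)

/-- The primitive of `k ↦ k e^{ik²t}` that vanishes at `k = 0`, by which the oscillation is
integrated. For `t = 0` the division by zero makes it identically `0`. -/
noncomputable def quadraticPhasePrimitive (t k : ℝ) : ℂ :=
  (Complex.exp (Complex.I * (k : ℂ) ^ 2 * (t : ℂ)) - 1) / (2 * Complex.I * t)

theorem norm_exp_I_mul_sq_mul (t k : ℝ) :
    ‖Complex.exp (Complex.I * (k : ℂ) ^ 2 * (t : ℂ))‖ = 1 := by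
  have h := Complex.norm_exp_I_mul_ofReal (k ^ 2 * t)
  push_cast at h
  rwa [← mul_assoc] at h

theorem quadraticPhasePrimitive_zero (t : ℝ) : quadraticPhasePrimitive t 0 = 0 := by
  simp [quadraticPhasePrimitive]

theorem norm_quadraticPhasePrimitive_le (t k : ℝ) : ‖quadraticPhasePrimitive t k‖ ≤ |t|⁻¹ := by
  have hnum : ‖Complex.exp (Complex.I * (k : ℂ) ^ 2 * (t : ℂ)) - 1‖ ≤ 2 := by
    refine (norm_sub_le _ _).trans_eq ?_
    rw [norm_exp_I_mul_sq_mul, norm_one, one_add_one_eq_two]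
  have hden : ‖2 * Complex.I * (t : ℂ)‖ = 2 * |t| := by simp
  rw [quadraticPhasePrimitive, norm_div, hden]
  calc _ ≤ 2 / (2 * |t|) := by gcongr
    _ = |t|⁻¹ := by rw [mul_comm, div_mul_cancel_right₀ two_ne_zero]

theorem hasDerivAt_quadraticPhasePrimitive {t : ℝ} (ht : t ≠ 0) (k : ℝ) :
    HasDerivAt (quadraticPhasePrimitive t)
      (k * Complex.exp (Complex.I * (k : ℂ) ^ 2 * (t : ℂ))) k := by
  have hphase := (((Complex.ofRealCLM.hasDerivAt (x := k)).pow 2).const_mul Complex.I).mul_const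
    (t : ℂ)
  refine ((hphase.cexp.sub_const 1).div_const (2 * Complex.I * t)).congr_deriv ?_
  have ht_complex : (t : ℂ) ≠ 0 := Complex.ofReal_ne_zero.2 ht
  simp only [Pi.pow_apply, Complex.ofRealCLM_apply, Nat.cast_ofNat, Nat.add_one_sub_one, pow_one,
    Complex.ofReal_one, mul_one]
  field_simp

theorem norm_integral_Ioi_mul_exp_I_mul_sq_mul_le {a a' : ℝ → ℂ} {t : ℝ} (ht : t ≠ 0)
    (ha : ∀ k ∈ Ioi 0, HasDerivAt a (a' k) k) (ha_cont : ContinuousWithinAt a (Ioi 0) 0)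
    (ha_int : IntegrableOn a (Ioi 0)) (ha'_int : IntegrableOn a' (Ioi 0))
    (hka_int : IntegrableOn (fun k : ℝ => (k : ℂ) * a k) (Ioi 0)) :
    ‖∫ k in Ioi (0 : ℝ), a k * (k * Complex.exp (Complex.I * (k : ℂ) ^ 2 * (t : ℂ)))‖ ≤
      |t|⁻¹ * ∫ k in Ioi (0 : ℝ), ‖a' k‖ := by
  have hΨ := hasDerivAt_quadraticPhasePrimitive ht
  have hΨ_zero : Tendsto (quadraticPhasePrimitive t) (𝓝[>] 0) (𝓝 0) := by
    simpa only [quadraticPhasePrimitive_zero] using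
      (hΨ 0).continuousAt.tendsto.mono_left nhdsWithin_le_nhds
  have hosc_int : IntegrableOn
      (fun k : ℝ => a k * (k * Complex.exp (Complex.I * (k : ℂ) ^ 2 * (t : ℂ)))) (Ioi 0) := by
    have := hka_int.bdd_mul (c := 1)
      (f := fun k : ℝ => Complex.exp (Complex.I * (k : ℂ) ^ 2 * (t : ℂ)))
      (by fun_prop) (.of_forall fun k => (norm_exp_I_mul_sq_mul t k).le)
    exact this.congr (.of_forall fun k => by ring)
  exact norm_integral_Ioi_mul_deriv_le ha (fun k _ => hΨ k) ha'_int hosc_int ha_cont hΨ_zero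
    (tendsto_zero_of_hasDerivAt_of_integrableOn_Ioi ha ha'_int ha_int)
    (fun k _ => norm_quadraticPhasePrimitive_le t k)

theorem integral_norm_mul_norm_add_norm_le {α E F G : Type*} [MeasurableSpace α] {μ : Measure α}
    [NormedAddCommGroup E] [NormedAddCommGroup F] [NormedAddCommGroup G]
    {w : α → E} {f : α → F} {g : α → G} (hw : MemLp w 2 μ) (hf : MemLp f 2 μ) (hg : MemLp g 2 μ) :
    ∫ x, ‖w x‖ * (‖f x‖ + ‖g x‖) ∂μ ≤
      √(2 * ∫ x, ‖w x‖ ^ 2 ∂μ) * √((∫ x, ‖f x‖ ^ 2 ∂μ) + ∫ x, ‖g x‖ ^ 2 ∂μ) := by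
  have hfg : MemLp (fun x => ‖f x‖ + ‖g x‖) 2 μ := hf.norm.add hg.norm
  have hf_sq : Integrable (fun x => ‖f x‖ ^ 2) μ := hf.norm.integrable_sq
  have hg_sq : Integrable (fun x => ‖g x‖ ^ 2) μ := hg.norm.integrable_sq
  have hsq : ∫ x, (‖f x‖ + ‖g x‖) ^ 2 ∂μ ≤
      2 * ((∫ x, ‖f x‖ ^ 2 ∂μ) + ∫ x, ‖g x‖ ^ 2 ∂μ) := by
    rw [← integral_add hf_sq hg_sq, ← integral_const_mul]
    exact integral_mono hfg.integrable_sq ((hf_sq.add hg_sq).const_mul 2) fun x => add_sq_le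
  have hCS : ∫ x, ‖w x‖ * (‖f x‖ + ‖g x‖) ∂μ ≤
      √(∫ x, ‖w x‖ ^ 2 ∂μ) * √(∫ x, (‖f x‖ + ‖g x‖) ^ 2 ∂μ) := by
    have := integral_mul_le_Lp_mul_Lq_of_nonneg (μ := μ) Real.HolderConjugate.two_two
      (f := fun x => ‖w x‖) (g := fun x => ‖f x‖ + ‖g x‖)
      (.of_forall fun x => norm_nonneg _) (.of_forall fun x => by positivity)
      (by simpa using hw.norm) (by simpa using hfg)
    simpa only [Real.rpow_two, ← Real.sqrt_eq_rpow] using this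
  calc _ ≤ √(∫ x, ‖w x‖ ^ 2 ∂μ) * √(2 * ((∫ x, ‖f x‖ ^ 2 ∂μ) + ∫ x, ‖g x‖ ^ 2 ∂μ)) :=
        hCS.trans (by gcongr)
    _ = _ := by
      rw [Real.sqrt_mul zero_le_two, Real.sqrt_mul zero_le_two]
      ring

theorem jap_pos (x : ℝ) : 0 < jap x := by
  unfold jap
  positivity

theorem one_le_jap (x : ℝ) : 1 ≤ jap x :=
  Real.one_le_sqrt.2 (le_add_of_nonneg_right (sq_nonneg x))

theorem abs_le_jap (x : ℝ) : |x| ≤ jap x :=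
  Real.abs_le_sqrt (le_add_of_nonneg_left zero_le_one)

theorem continuous_jap : Continuous jap := by
  unfold jap
  fun_prop

theorem inv_jap_sq (x : ℝ) : (jap x)⁻¹ ^ 2 = (1 + x ^ 2)⁻¹ := by
  rw [inv_pow, jap, Real.sq_sqrt (by positivity)]

theorem norm_inv_jap (x : ℝ) : ‖(jap x)⁻¹‖ = (jap x)⁻¹ :=
  Real.norm_of_nonneg (inv_nonneg.2 (jap_pos x).le)

theorem memLp_two_inv_jap : MemLp (fun x => (jap x)⁻¹) 2 := by
  have hcont : Continuous fun x => (jap x)⁻¹ := continuous_jap.inv₀ fun x => (jap_pos x).ne'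
  rw [memLp_two_iff_integrable_sq hcont.aestronglyMeasurable]
  simpa only [inv_jap_sq] using integrable_inv_one_add_sq

theorem integral_Ioi_inv_jap_sq : ∫ x in Ioi (0 : ℝ), (jap x)⁻¹ ^ 2 = Real.pi / 2 := by
  simp only [inv_jap_sq, integral_Ioi_inv_one_add_sq, Real.arctan_zero, sub_zero]

section HalfLineSobolev

/-- Membership in the Sobolev space `H¹(0, ∞)` of a function that is `C¹` up to the endpoint `0`. -/
structure MemHalfLineH1 (h : ℝ → ℂ) : Prop where
  contDiffOn : ContDiffOn ℝ 1 h (Ici 0)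
  memLp : MemLp h 2 (volume.restrict (Ioi 0))
  memLp_derivWithin : MemLp (derivWithin h (Ici 0)) 2 (volume.restrict (Ioi 0))

/-- The norm of the Sobolev space `H¹(0, ∞)`, for functions that satisfy `MemHalfLineH1`. For other
functions it has no meaning, since an integral that diverges counts as `0`. -/
noncomputable def halfLineH1Norm (h : ℝ → ℂ) : ℝ :=
  √((∫ k in Ioi (0 : ℝ), ‖h k‖ ^ 2) + ∫ k in Ioi (0 : ℝ), ‖derivWithin h (Ici 0) k‖ ^ 2)

variable {h : ℝ → ℂ}

theorem integrableOn_inv_jap_mul_norm_add_norm (hh : MemHalfLineH1 h) :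
    IntegrableOn (fun k => (jap k)⁻¹ * (‖h k‖ + ‖derivWithin h (Ici 0) k‖)) (Ioi 0) :=
  (memLp_two_inv_jap.restrict _).integrable_mul (hh.memLp.norm.add hh.memLp_derivWithin.norm)

theorem integral_inv_jap_mul_norm_add_norm_le (hh : MemHalfLineH1 h) :
    ∫ k in Ioi (0 : ℝ), (jap k)⁻¹ * (‖h k‖ + ‖derivWithin h (Ici 0) k‖) ≤
      √Real.pi * halfLineH1Norm h := by
  have hCS := integral_norm_mul_norm_add_norm_le (memLp_two_inv_jap.restrict (Ioi 0)) hh.memLp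
    hh.memLp_derivWithin
  simpa only [halfLineH1Norm, norm_inv_jap, integral_Ioi_inv_jap_sq,
    mul_div_cancel₀ _ (two_ne_zero' ℝ)] using hCS

theorem derivWithin_Ici_eq_deriv {E : Type*} [NormedAddCommGroup E] [NormedSpace ℝ E]
    {f : ℝ → E} (hf : Differentiable ℝ f) {a k : ℝ} (hk : k ∈ Ici a) :
    derivWithin f (Ici a) k = deriv f k :=
  (hf k).derivWithin (uniqueDiffOn_Ici a k hk)

theorem MemHalfLineH1.of_contDiff (hh : ContDiff ℝ 1 h) (hh_sq : MemLp h 2)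
    (hh'_sq : MemLp (deriv h) 2) : MemHalfLineH1 h where
  contDiffOn := hh.contDiffOn
  memLp := hh_sq.restrict _
  memLp_derivWithin := (hh'_sq.restrict _).ae_eq <|
    ae_restrict_of_forall_mem measurableSet_Ioi fun _ hk =>
      (derivWithin_Ici_eq_deriv (hh.differentiable one_ne_zero) (Ioi_subset_Ici_self hk)).symm

theorem halfLineH1Norm_le (hd : Differentiable ℝ h) (hh_sq : MemLp h 2)
    (hh'_sq : MemLp (deriv h) 2) :
    halfLineH1Norm h ≤ √((∫ k, ‖h k‖ ^ 2) + ∫ k, ‖deriv h k‖ ^ 2) := by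
  have hderiv : ∫ k in Ioi (0 : ℝ), ‖derivWithin h (Ici 0) k‖ ^ 2 =
      ∫ k in Ioi (0 : ℝ), ‖deriv h k‖ ^ 2 :=
    setIntegral_congr_fun measurableSet_Ioi fun k hk => by
      simp only [derivWithin_Ici_eq_deriv hd (Ioi_subset_Ici_self hk)]
  rw [halfLineH1Norm, hderiv]
  refine Real.sqrt_le_sqrt (add_le_add ?_ ?_)
  · exact setIntegral_le_integral hh_sq.norm.integrable_sq (.of_forall fun k => by positivity)
  · exact setIntegral_le_integral hh'_sq.norm.integrable_sq (.of_forall fun k => by positivity)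

theorem MemHalfLineH1.of_hasCompactSupport (hh : ContDiff ℝ 1 h) (hc : HasCompactSupport h) :
    MemHalfLineH1 h :=
  .of_contDiff hh (hh.continuous.memLp_of_hasCompactSupport hc)
    ((hh.continuous_deriv le_rfl).memLp_of_hasCompactSupport hc.deriv)

theorem halfLineH1Norm_le_of_hasCompactSupport (hh : ContDiff ℝ 1 h) (hc : HasCompactSupport h) :
    halfLineH1Norm h ≤ √((∫ k, ‖h k‖ ^ 2) + ∫ k, ‖deriv h k‖ ^ 2) :=
  halfLineH1Norm_le (hh.differentiable one_ne_zero)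
    (hh.continuous.memLp_of_hasCompactSupport hc)
    ((hh.continuous_deriv le_rfl).memLp_of_hasCompactSupport hc.deriv)

end HalfLineSobolev

section Amplitude

theorem norm_derivWithin_mul_mul_le {A : Type*} [NormedCommRing A] [NormedAlgebra ℝ A]
    {f g h : ℝ → A} {s : Set ℝ} {k M : ℝ}
    (hf : DifferentiableWithinAt ℝ f s k) (hg : DifferentiableWithinAt ℝ g s k)
    (hh : DifferentiableWithinAt ℝ h s k) (hgM : ‖g k‖ ≤ M) (hgM' : ‖derivWithin g s k‖ ≤ M) :
    ‖derivWithin (f * g * h) s k‖ ≤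
      M * ((‖f k‖ + ‖derivWithin f s k‖) * (‖h k‖ + ‖derivWithin h s k‖)) := by
  have hM : 0 ≤ M := (norm_nonneg _).trans hgM
  rw [derivWithin_mul (hf.mul hg) hh, derivWithin_mul hf hg, Pi.mul_apply]
  calc
    _ ≤ (‖derivWithin f s k‖ * ‖g k‖ + ‖f k‖ * ‖derivWithin g s k‖) * ‖h k‖
        + ‖f k‖ * ‖g k‖ * ‖derivWithin h s k‖ :=
      norm_add_le_of_le
        (norm_mul_le_of_le (norm_add_le_of_le (norm_mul_le _ _) (norm_mul_le _ _)) le_rfl)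
        (norm_mul_le_of_le (norm_mul_le _ _) le_rfl)
    _ ≤ (‖derivWithin f s k‖ * M + ‖f k‖ * M) * ‖h k‖ + ‖f k‖ * M * ‖derivWithin h s k‖ := by
      gcongr
    _ = M * ((‖f k‖ + ‖derivWithin f s k‖) * (‖h k‖ + ‖derivWithin h s k‖)
        - ‖derivWithin f s k‖ * ‖derivWithin h s k‖) := by ring
    _ ≤ _ := by
      gcongr
      exact sub_le_self _ (by positivity)

theorem norm_ofReal_mul_le_one_of_norm_le_inv_jap {z : ℂ} {k : ℝ}
    (hz : ‖z‖ ≤ (jap k)⁻¹) : ‖(k : ℂ) * z‖ ≤ 1 := by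
  rw [norm_mul, Complex.norm_real, Real.norm_eq_abs]
  calc |k| * ‖z‖ ≤ jap k * (jap k)⁻¹ := mul_le_mul (abs_le_jap k) hz (norm_nonneg z) (jap_pos k).le
    _ = 1 := mul_inv_cancel₀ (jap_pos k).ne'

variable {ψ q h : ℝ → ℂ} {M : ℝ}

theorem norm_derivWithin_amplitude_le (hψ : DifferentiableOn ℝ ψ (Ici 0))
    (hq : DifferentiableOn ℝ q (Ici 0)) (hh : DifferentiableOn ℝ h (Ici 0))
    (hψj : ∀ k, 0 ≤ k → ‖ψ k‖ + ‖derivWithin ψ (Ici 0) k‖ ≤ (jap k)⁻¹)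
    (hqM : ∀ k, 0 ≤ k → ‖q k‖ ≤ M) (hqM' : ∀ k, 0 ≤ k → ‖derivWithin q (Ici 0) k‖ ≤ M)
    {k : ℝ} (hk : 0 ≤ k) :
    ‖derivWithin (ψ * q * h) (Ici 0) k‖ ≤
      M * ((jap k)⁻¹ * (‖h k‖ + ‖derivWithin h (Ici 0) k‖)) := by
  have hM : 0 ≤ M := (norm_nonneg _).trans (hqM k hk)
  refine (norm_derivWithin_mul_mul_le (hψ k hk) (hq k hk) (hh k hk) (hqM k hk)
    (hqM' k hk)).trans ?_
  gcongr
  exact hψj k hk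

theorem integrableOn_derivWithin_amplitude (hψ : ContDiffOn ℝ 1 ψ (Ici 0))
    (hq : ContDiffOn ℝ 1 q (Ici 0)) (hh : MemHalfLineH1 h)
    (hψj : ∀ k, 0 ≤ k → ‖ψ k‖ + ‖derivWithin ψ (Ici 0) k‖ ≤ (jap k)⁻¹)
    (hqM : ∀ k, 0 ≤ k → ‖q k‖ ≤ M) (hqM' : ∀ k, 0 ≤ k → ‖derivWithin q (Ici 0) k‖ ≤ M) :
    IntegrableOn (derivWithin (ψ * q * h) (Ici 0)) (Ioi 0) := by
  have hcont : ContinuousOn (derivWithin (ψ * q * h) (Ici 0)) (Ioi 0) :=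
    (((hψ.mul hq).mul hh.contDiffOn).continuousOn_derivWithin (uniqueDiffOn_Ici 0) le_rfl).mono
      Ioi_subset_Ici_self
  refine ((integrableOn_inv_jap_mul_norm_add_norm hh).const_mul M).mono'
    (hcont.aestronglyMeasurable measurableSet_Ioi) ?_
  exact ae_restrict_of_forall_mem measurableSet_Ioi fun k hk =>
    norm_derivWithin_amplitude_le (hψ.differentiableOn one_ne_zero)
      (hq.differentiableOn one_ne_zero) (hh.contDiffOn.differentiableOn one_ne_zero)
      hψj hqM hqM' (le_of_lt hk)

theorem integral_norm_derivWithin_amplitude_le (hψ : ContDiffOn ℝ 1 ψ (Ici 0))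
    (hq : ContDiffOn ℝ 1 q (Ici 0)) (hh : MemHalfLineH1 h)
    (hψj : ∀ k, 0 ≤ k → ‖ψ k‖ + ‖derivWithin ψ (Ici 0) k‖ ≤ (jap k)⁻¹)
    (hqM : ∀ k, 0 ≤ k → ‖q k‖ ≤ M) (hqM' : ∀ k, 0 ≤ k → ‖derivWithin q (Ici 0) k‖ ≤ M) :
    ∫ k in Ioi (0 : ℝ), ‖derivWithin (ψ * q * h) (Ici 0) k‖ ≤
      M * (√Real.pi * halfLineH1Norm h) := by
  have hM : 0 ≤ M := (norm_nonneg _).trans (hqM 0 le_rfl)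
  calc
    _ ≤ ∫ k in Ioi (0 : ℝ), M * ((jap k)⁻¹ * (‖h k‖ + ‖derivWithin h (Ici 0) k‖)) :=
      setIntegral_mono_on
        (integrableOn_derivWithin_amplitude hψ hq hh hψj hqM hqM').norm
        ((integrableOn_inv_jap_mul_norm_add_norm hh).const_mul M) measurableSet_Ioi
        fun k hk => norm_derivWithin_amplitude_le (hψ.differentiableOn one_ne_zero)
          (hq.differentiableOn one_ne_zero) (hh.contDiffOn.differentiableOn one_ne_zero)
          hψj hqM hqM' (le_of_lt hk)
    _ = M * ∫ k in Ioi (0 : ℝ), (jap k)⁻¹ * (‖h k‖ + ‖derivWithin h (Ici 0) k‖) :=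
      integral_const_mul _ _
    _ ≤ _ := by
      gcongr
      exact integral_inv_jap_mul_norm_add_norm_le hh

theorem integrableOn_Ioi_mul_of_continuousOn_of_norm_le {f g : ℝ → ℂ} {a B : ℝ}
    (hg : IntegrableOn g (Ioi a)) (hf : ContinuousOn f (Ici a)) (hfB : ∀ k, a ≤ k → ‖f k‖ ≤ B) :
    IntegrableOn (f * g) (Ioi a) :=
  hg.bdd_mul ((hf.mono Ioi_subset_Ici_self).aestronglyMeasurable measurableSet_Ioi)
    (ae_restrict_of_forall_mem measurableSet_Ioi fun k hk => hfB k (le_of_lt hk))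

theorem norm_integral_amplitude_mul_exp_I_mul_sq_mul_le {t : ℝ} (ht : t ≠ 0)
    (hψ : ContDiffOn ℝ 1 ψ (Ici 0)) (hq : ContDiffOn ℝ 1 q (Ici 0)) (hh : MemHalfLineH1 h)
    (hψj : ∀ k, 0 ≤ k → ‖ψ k‖ + ‖derivWithin ψ (Ici 0) k‖ ≤ (jap k)⁻¹)
    (hqM : ∀ k, 0 ≤ k → ‖q k‖ ≤ M) (hqM' : ∀ k, 0 ≤ k → ‖derivWithin q (Ici 0) k‖ ≤ M)
    (hh_int : IntegrableOn h (Ioi 0)) :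
    ‖∫ k in Ioi (0 : ℝ),
        (ψ * q * h) k * (k * Complex.exp (Complex.I * (k : ℂ) ^ 2 * (t : ℂ)))‖ ≤
      M * √Real.pi * |t|⁻¹ * halfLineH1Norm h := by
  have ha : ContDiffOn ℝ 1 (ψ * q * h) (Ici 0) := (hψ.mul hq).mul hh.contDiffOn
  have hderiv : ∀ k ∈ Ioi (0 : ℝ),
      HasDerivAt (ψ * q * h) (derivWithin (ψ * q * h) (Ici 0) k) k := fun k hk =>
    (ha.differentiableOn one_ne_zero k (Ioi_subset_Ici_self hk)).hasDerivWithinAt.hasDerivAt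
      (Ici_mem_nhds hk)
  have hψ_le : ∀ k, 0 ≤ k → ‖ψ k‖ ≤ (jap k)⁻¹ := fun k hk =>
    (le_add_of_nonneg_right (norm_nonneg _)).trans (hψj k hk)
  have hψ_one : ∀ k, 0 ≤ k → ‖ψ k‖ ≤ 1 := fun k hk =>
    (hψ_le k hk).trans (inv_le_one_of_one_le₀ (one_le_jap k))
  have ha_int : IntegrableOn (ψ * q * h) (Ioi 0) :=
    integrableOn_Ioi_mul_of_continuousOn_of_norm_le hh_int (hψ.continuousOn.mul hq.continuousOn)
      fun k hk => norm_mul_le_of_le (hψ_one k hk) (hqM k hk)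
  have hka_int : IntegrableOn (fun k : ℝ => (k : ℂ) * (ψ * q * h) k) (Ioi 0) := by
    have hcont : ContinuousOn (fun k : ℝ => k * ψ k * q k) (Ici 0) :=
      (Complex.continuous_ofReal.continuousOn.mul hψ.continuousOn).mul hq.continuousOn
    refine (integrableOn_Ioi_mul_of_continuousOn_of_norm_le hh_int hcont fun k hk =>
      norm_mul_le_of_le (norm_ofReal_mul_le_one_of_norm_le_inv_jap (hψ_le k hk))
        (hqM k hk)).congr (.of_forall fun k => ?_)
    simp only [Pi.mul_apply, mul_assoc]
  calc
    _ ≤ |t|⁻¹ * ∫ k in Ioi (0 : ℝ), ‖derivWithin (ψ * q * h) (Ici 0) k‖ :=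
      norm_integral_Ioi_mul_exp_I_mul_sq_mul_le ht hderiv
        ((ha.continuousOn 0 self_mem_Ici).mono Ioi_subset_Ici_self) ha_int
        (integrableOn_derivWithin_amplitude hψ hq hh hψj hqM hqM') hka_int
    _ ≤ |t|⁻¹ * (M * (√Real.pi * halfLineH1Norm h)) := by
      gcongr
      exact integral_norm_derivWithin_amplitude_le hψ hq hh hψj hqM hqM'
    _ = _ := by ring

theorem statement_9_general {w t : ℝ} (hw : 0 < w) (ht : t ≠ 0)
    (hq : ContDiffOn ℝ 1 q (Ici 0)) (hqM : ∀ k, 0 ≤ k → w * ‖q k‖ ≤ M)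
    (hqM' : ∀ k, 0 ≤ k → w * ‖derivWithin q (Ici 0) k‖ ≤ M)
    (hψ : ContDiffOn ℝ 1 ψ (Ici 0))
    (hψj : ∀ k, 0 ≤ k → ‖ψ k‖ + ‖derivWithin ψ (Ici 0) k‖ ≤ (jap k)⁻¹)
    (hh : MemHalfLineH1 h) (hh_int : IntegrableOn h (Ioi 0)) :
    w * ‖∫ k in Ioi (0 : ℝ), (k : ℂ) * ψ k * q k *
        Complex.exp (Complex.I * (k : ℂ) ^ 2 * (t : ℂ)) * h k‖ ≤
      M * √Real.pi * |t|⁻¹ * halfLineH1Norm h := by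
  have hbound := norm_integral_amplitude_mul_exp_I_mul_sq_mul_le ht hψ hq hh hψj
    (fun k hk => (le_div_iff₀' hw).2 (hqM k hk)) (fun k hk => (le_div_iff₀' hw).2 (hqM' k hk))
    hh_int
  have hcomm : ∀ k : ℝ,
      (k : ℂ) * ψ k * q k * Complex.exp (Complex.I * (k : ℂ) ^ 2 * (t : ℂ)) * h k =
        (ψ * q * h) k * (k * Complex.exp (Complex.I * (k : ℂ) ^ 2 * (t : ℂ))) := fun k => by
    simp only [Pi.mul_apply]
    ring
  simp only [hcomm]
  calc
    _ ≤ w * (M / w * √Real.pi * |t|⁻¹ * halfLineH1Norm h) := by gcongr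
    _ = _ := by field_simp

end Amplitude

/-- Improved local decay: if `Q(x,·)` is `C¹` on `[0,∞)` with `|⟨x⟩^β ∂_k^j Q| ≤ M` (`j = 0,1`),
and `φ(k) = k ψ(k)` with `|ψ| + |ψ'| ≤ ⟨k⟩⁻¹` on `[0,∞)`, then
`⟨x⟩^β |∫_0^∞ φ(k) Q(x,k) e^{ik²t} h(k) dk| ≤ C |t|⁻¹ ‖h‖_{H¹}` for `|t| ≥ 1`,
with `C` depending only on `M`. -/
theorem statement_9 :
    ∀ M : ℝ, 0 < M → ∃ C : ℝ, 0 < C ∧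
      ∀ (β : ℝ) (Q : ℝ → ℝ → ℂ) (ψ : ℝ → ℂ),
        (∀ x : ℝ, ContDiffOn ℝ 1 (fun k => Q x k) (Set.Ici (0:ℝ))) →
        (∀ x k : ℝ, 0 ≤ k → jap x ^ β * ‖Q x k‖ ≤ M) →
        (∀ x k : ℝ, 0 ≤ k →
          jap x ^ β * ‖derivWithin (fun k' => Q x k') (Set.Ici (0:ℝ)) k‖ ≤ M) →
        ContDiffOn ℝ 1 ψ (Set.Ici (0:ℝ)) →
        (∀ k : ℝ, 0 ≤ k → ‖ψ k‖ + ‖derivWithin ψ (Set.Ici (0:ℝ)) k‖ ≤ (jap k)⁻¹) →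
        ∀ t : ℝ, 1 ≤ |t| →
        ∀ h : ℝ → ℂ, ContDiff ℝ 1 h → HasCompactSupport h →
        ∀ x : ℝ,
          jap x ^ β * ‖∫ k in Set.Ioi (0:ℝ), (k : ℂ) * ψ k * Q x k *
              Complex.exp (Complex.I * (k : ℂ) ^ 2 * (t : ℂ)) * h k‖ ≤
            C * |t|⁻¹ * Real.sqrt ((∫ k : ℝ, ‖h k‖ ^ 2) + ∫ k : ℝ, ‖deriv h k‖ ^ 2) := by
  intro M hM
  refine ⟨M * √Real.pi, by positivity, fun β Q ψ hQ hQM hQM' hψ hψj t ht h hh hc x => ?_⟩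
  exact (statement_9_general (Real.rpow_pos_of_pos (jap_pos x) β) (abs_pos.1 (one_pos.trans_le ht))
    (hQ x) (hQM x) (hQM' x) hψ hψj (.of_hasCompactSupport hh hc)
    (hh.continuous.integrable_of_hasCompactSupport hc).integrableOn).trans
    (by gcongr; exact halfLineH1Norm_le_of_hasCompactSupport hh hc)
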